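/- Let a ∈ (−1,1) and b > 1. A function g ∈ X_{a,b} satisfies L[g] = 0 almost everywhere on (0,∞) if and only if there is a constant c ∈ ℝ such that g(x) = c (1−x) e^{−x} for almost every x > 0; i.e. the kernel of L on X_{a,b} is the one-dimensional span of m₁(x) = (1−x)e^{−x}. -/

import Mathlib

open MeasureTheory Real Set Filter

noncomputable def weight (a b x : ℝ) : ℝ := if x ≤ 1 then x ^ a else x ^ b

noncomputable def Xnorm (a b : ℝ) (g : ℝ → ℝ) : ℝ :=
  ∫ x in Ioi (0:ℝ), |g x| * weight a b x

def MemX (a b : ℝ) (g : ℝ → ℝ) : Prop :=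
  IntegrableOn (fun x => g x * weight a b x) (Ioi 0)

noncomputable def Kern (ε : ℝ) (W : ℝ → ℝ → ℝ) (x y : ℝ) : ℝ := 2 + ε * W x y

def GoodW (α : ℝ) (W : ℝ → ℝ → ℝ) : Prop :=
  ContinuousOn (fun p : ℝ × ℝ => W p.1 p.2) (Ioi 0 ×ˢ Ioi 0) ∧
  (∀ x y : ℝ, 0 < x → 0 < y → W x y = W y x) ∧
  (∀ l x y : ℝ, 0 < l → 0 < x → 0 < y → W (l * x) (l * y) = W x y) ∧
  (∀ x y : ℝ, 0 < x → 0 < y → 0 ≤ W x y ∧ W x y ≤ (x / y) ^ α + (y / x) ^ α)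

def IsProfile (K : ℝ → ℝ → ℝ) (φ : ℝ → ℝ) : Prop :=
  LocallyIntegrableOn φ (Ioi 0) ∧
  (∀ᵐ x ∂(volume.restrict (Ioi (0:ℝ))), 0 ≤ φ x) ∧
  IntegrableOn (fun x => x * φ x) (Ioi 0) ∧
  (∀ᵐ x ∂(volume.restrict (Ioi (0:ℝ))),
    x ^ 2 * φ x = ∫ y in Ioo 0 x, ∫ z in Ioi (x - y), y * K y z * φ y * φ z)

def IsNormalised (φ : ℝ → ℝ) : Prop := ∫ x in Ioi (0:ℝ), x * φ x = 1

noncomputable def Lop (g : ℝ → ℝ) (x : ℝ) : ℝ :=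
  g x - (2 / x ^ 2) *
    ∫ y in Ioo 0 x, ∫ z in Ioi (x - y), (y * exp (-y) * g z + y * g y * exp (-z))


lemma weight_pos' (a b x : ℝ) (hx : 0 < x) : 0 < weight a b x := by
  unfold weight; split_ifs <;> positivity

lemma measurable_weight (a b : ℝ) : Measurable (weight a b) := by
  unfold weight
  refine Measurable.ite measurableSet_Iic ?_ ?_ <;> fun_prop

lemma le_weight (a b x : ℝ) (ha : a < 1) (hb : 1 < b) (hx : 0 < x) : x ≤ weight a b x := by
  unfold weight
  split_ifs with h
  · calc x = x ^ (1:ℝ) := (rpow_one x).symm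
      _ ≤ x ^ a := rpow_le_rpow_of_exponent_ge hx h ha.le
  · calc x = x ^ (1:ℝ) := (rpow_one x).symm
      _ ≤ x ^ b := rpow_le_rpow_of_exponent_le (not_le.1 h).le hb.le

lemma aesm_of_MemX (a b : ℝ) (g : ℝ → ℝ) (hg : MemX a b g) :
    AEStronglyMeasurable g (volume.restrict (Ioi 0)) := by
  have h1 : AEStronglyMeasurable (fun x => (g x * weight a b x) * (weight a b x)⁻¹)
      (volume.restrict (Ioi 0)) :=
    hg.aestronglyMeasurable.mul (measurable_weight a b).inv.aestronglyMeasurable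
  refine h1.congr ?_
  filter_upwards [ae_restrict_mem measurableSet_Ioi] with x hx
  have := weight_pos' a b x hx
  field_simp

lemma xg_int (a b : ℝ) (ha : a < 1) (hb : 1 < b) (g : ℝ → ℝ) (hg : MemX a b g) :
    IntegrableOn (fun x => x * g x) (Ioi 0) := by
  refine Integrable.mono hg (aestronglyMeasurable_id.mul (aesm_of_MemX a b g hg)) ?_
  filter_upwards [ae_restrict_mem measurableSet_Ioi] with x hx
  have h0 := weight_pos' a b x hx
  have h1 := le_weight a b x ha hb hx
  have hx' : 0 < x := hx
  rw [norm_mul, norm_mul, norm_of_nonneg hx'.le, norm_of_nonneg h0.le, mul_comm]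
  gcongr

section
variable {g : ℝ → ℝ}

lemma g_int (hm : AEStronglyMeasurable g (volume.restrict (Ioi 0)))
    (hi : IntegrableOn (fun x => x * g x) (Ioi 0)) (t : ℝ) (ht : 0 < t) :
    IntegrableOn g (Ioi t) := by
  have hsub : Ioi t ⊆ Ioi (0:ℝ) := Ioi_subset_Ioi ht.le
  refine Integrable.mono ((hi.mono_set hsub).const_mul t⁻¹)
    (hm.mono_measure (Measure.restrict_mono hsub le_rfl)) ?_
  filter_upwards [ae_restrict_mem measurableSet_Ioi] with x hx
  have hx' : t < x := hx
  have : 0 < x := ht.trans hx'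
  rw [norm_mul, norm_mul, norm_of_nonneg this.le, norm_inv, norm_of_nonneg ht.le, ← mul_assoc]
  refine le_mul_of_one_le_left (norm_nonneg _) ?_
  rw [inv_mul_eq_div, one_le_div ht]; exact hx'.le

noncomputable def tailG (g : ℝ → ℝ) (t : ℝ) : ℝ := ∫ z in Ioi t, g z

noncomputable def kerE (g : ℝ → ℝ) (p : ℝ × ℝ) : ℝ := {p : ℝ × ℝ | p.1 < p.2}.indicator (fun p => g p.2) p

lemma kerE_eq_left (t z : ℝ) : kerE g (t, z) = (Ioi t).indicator g z := by
  simp [kerE, indicator]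

lemma kerE_eq_right (t z : ℝ) : kerE g (t, z) = (Iio z).indicator (fun _ => g z) t := by
  simp [kerE, indicator]

lemma kerE_int (hm : AEStronglyMeasurable g (volume.restrict (Ioi 0)))
    (hi : IntegrableOn (fun x => x * g x) (Ioi 0)) :
    Integrable (kerE g) ((volume.restrict (Ioi 0)).prod (volume.restrict (Ioi 0))) := by
  have hmeas : AEStronglyMeasurable (kerE g)
      ((volume.restrict (Ioi (0:ℝ))).prod (volume.restrict (Ioi (0:ℝ)))) := by
    refine AEStronglyMeasurable.indicator hm.comp_snd ?_
    exact measurableSet_lt measurable_fst measurable_snd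
  rw [integrable_prod_iff' hmeas]
  constructor
  · filter_upwards with z
    simp only [kerE_eq_right]
    rw [integrable_indicator_iff measurableSet_Iio]
    refine integrableOn_const ?_
    rw [Measure.restrict_apply measurableSet_Iio, Iio_inter_Ioi]
    simp
  · refine hi.norm.congr ?_
    filter_upwards [ae_restrict_mem measurableSet_Ioi] with z hz
    have hz' : 0 < z := hz
    simp only [kerE_eq_right, norm_indicator_eq_indicator_norm]
    rw [integral_indicator measurableSet_Iio, Measure.restrict_restrict measurableSet_Iio,
      Iio_inter_Ioi, setIntegral_const]
    simp [hz'.le, abs_of_pos hz']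

lemma kerE_slice (t : ℝ) (ht : 0 < t) : ∫ z in Ioi 0, kerE g (t, z) = tailG g t := by
  simp only [kerE_eq_left]
  rw [integral_indicator measurableSet_Ioi, Measure.restrict_restrict measurableSet_Ioi,
    Ioi_inter_Ioi, tailG]
  simp [ht.le]

lemma G_int (hm : AEStronglyMeasurable g (volume.restrict (Ioi 0)))
    (hi : IntegrableOn (fun x => x * g x) (Ioi 0)) : IntegrableOn (tailG g) (Ioi 0) := by
  refine (kerE_int hm hi).integral_prod_left.congr ?_
  filter_upwards [ae_restrict_mem measurableSet_Ioi] with t ht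
  exact kerE_slice t ht

lemma eG_int (hm : AEStronglyMeasurable g (volume.restrict (Ioi 0)))
    (hi : IntegrableOn (fun x => x * g x) (Ioi 0)) (f : ℝ → ℝ) (hf : Continuous f) (x : ℝ) :
    IntegrableOn (fun t => f t * tailG g t) (Ioo 0 x) := by
  obtain ⟨C, hC⟩ := (isCompact_Icc (a := (0:ℝ)) (b := x)).exists_bound_of_continuousOn
    hf.continuousOn
  refine Integrable.bdd_mul (c := C) ((G_int hm hi).mono_set Ioo_subset_Ioi_self)
    hf.aestronglyMeasurable ?_
  filter_upwards [ae_restrict_mem measurableSet_Ioo] with t ht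
  exact hC t (Ioo_subset_Icc_self ht)

lemma yg_int (hi : IntegrableOn (fun x => x * g x) (Ioi 0)) (f : ℝ → ℝ) (hf : Continuous f)
    (x : ℝ) :
    IntegrableOn (fun t => f t * (t * g t)) (Ioo 0 x) := by
  obtain ⟨C, hC⟩ := (isCompact_Icc (a := (0:ℝ)) (b := x)).exists_bound_of_continuousOn
    hf.continuousOn
  refine Integrable.bdd_mul (c := C) (hi.mono_set Ioo_subset_Ioi_self)
    hf.aestronglyMeasurable ?_
  filter_upwards [ae_restrict_mem measurableSet_Ioo] with t ht
  exact hC t (Ioo_subset_Icc_self ht)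

lemma phi_int (m : ℝ) (hm : 0 ≤ m) : ∫ t in Ioo 0 m, (1 + t) * exp t = m * exp m := by
  rw [← integral_Ioc_eq_integral_Ioo, ← intervalIntegral.integral_of_le hm,
    intervalIntegral.integral_eq_sub_of_hasDerivAt (f := fun t => t * exp t)]
  · simp
  · intro t _
    have := (hasDerivAt_id t).mul (Real.hasDerivAt_exp t)
    refine HasDerivAt.congr_deriv this ?_
    simp only [id]; ring
  · apply Continuous.intervalIntegrable; fun_prop

lemma parts (hm : AEStronglyMeasurable g (volume.restrict (Ioi 0)))
    (hi : IntegrableOn (fun x => x * g x) (Ioi 0)) (x : ℝ) (hx : 0 < x) :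
    ∫ t in Ioo 0 x, (1 + t) * exp t * tailG g t
      = (∫ t in Ioo 0 x, exp t * (t * g t)) + x * exp x * tailG g x := by
  set k : ℝ → ℝ := (Iio x).indicator (fun t => (1 + t) * exp t) with hk
  have hkm : Measurable k := by
    refine Measurable.indicator ?_ measurableSet_Iio
    fun_prop
  obtain ⟨C, hC⟩ := (isCompact_Icc (a := (0:ℝ)) (b := x)).exists_bound_of_continuousOn
    (f := fun t => (1 + t) * exp t) (by fun_prop)
  have hC0 : 0 ≤ C := (norm_nonneg _).trans (hC 0 ⟨le_rfl, hx.le⟩)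
  have hint : Integrable (fun p : ℝ × ℝ => k p.1 * kerE g p)
      ((volume.restrict (Ioi 0)).prod (volume.restrict (Ioi 0))) := by
    refine Integrable.bdd_mul (c := C) (kerE_int hm hi)
      (hkm.comp measurable_fst).aestronglyMeasurable ?_
    have : ∀ᵐ p : ℝ × ℝ ∂((volume.restrict (Ioi 0)).prod (volume.restrict (Ioi 0))), p.1 ∈ Ioi (0:ℝ) :=
      Measure.quasiMeasurePreserving_fst.ae (ae_restrict_mem measurableSet_Ioi)
    filter_upwards [this] with p hp
    by_cases h : p.1 < x
    · simp only [hk, indicator, mem_Iio, h, if_true]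
      exact hC p.1 ⟨le_of_lt hp, h.le⟩
    · simp [hk, indicator, h, hC0]
  have hsw := integral_integral_swap (f := fun t z => k t * kerE g (t, z)) hint
  have hL : ∫ t in Ioi 0, ∫ z in Ioi 0, k t * kerE g (t, z)
      = ∫ t in Ioo 0 x, (1 + t) * exp t * tailG g t := by
    have h1 : ∫ t in Ioi 0, ∫ z in Ioi 0, k t * kerE g (t, z)
        = ∫ t in Ioi 0, (Iio x).indicator (fun t => (1 + t) * exp t * tailG g t) t := by
      refine setIntegral_congr_fun measurableSet_Ioi fun t ht => ?_
      rw [integral_const_mul, kerE_slice t ht, hk]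
      by_cases h : t < x <;> simp [indicator, h]
    rw [h1, integral_indicator measurableSet_Iio, Measure.restrict_restrict measurableSet_Iio,
      Iio_inter_Ioi]
  have hR1 : ∀ z ∈ Ioi (0:ℝ), ∫ t in Ioi 0, k t * kerE g (t, z) = min z x * exp (min z x) * g z := by
    intro z hz
    have hz' : 0 < z := hz
    have h1 : ∀ t, k t * kerE g (t, z) = (Iio (min z x)).indicator (fun t => ((1 + t) * exp t) * g z) t := by
      intro t
      rw [kerE_eq_right, hk]
      by_cases h : t < x <;> by_cases h' : t < z <;> simp [indicator, h, h']
    simp only [h1]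
    rw [integral_indicator measurableSet_Iio, Measure.restrict_restrict measurableSet_Iio,
      Iio_inter_Ioi, integral_mul_const, phi_int _ (le_min hz'.le hx.le)]
  have hR : ∫ z in Ioi 0, ∫ t in Ioi 0, k t * kerE g (t, z)
      = (∫ t in Ioo 0 x, exp t * (t * g t)) + x * exp x * tailG g x := by
    rw [setIntegral_congr_fun measurableSet_Ioi hR1, ← Ioc_union_Ioi_eq_Ioi hx.le]
    have e1 : ∀ z ∈ Ioc 0 x, min z x * exp (min z x) * g z = exp z * (z * g z) := by
      intro z hz
      rw [min_eq_left hz.2]; ring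
    have e2 : ∀ z ∈ Ioi x, min z x * exp (min z x) * g z = x * exp x * g z := by
      intro z hz
      rw [min_eq_right (le_of_lt hz)]
    rw [setIntegral_union Ioc_disjoint_Ioi_same measurableSet_Ioi,
      setIntegral_congr_fun measurableSet_Ioc e1, setIntegral_congr_fun measurableSet_Ioi e2,
      integral_const_mul, integral_Ioc_eq_integral_Ioo, tailG]
    · rw [integrableOn_congr_fun e1 measurableSet_Ioc, integrableOn_Ioc_iff_integrableOn_Ioo]
      exact yg_int hi _ continuous_exp x
    · rw [integrableOn_congr_fun e2 measurableSet_Ioi]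
      exact (g_int hm hi x hx).const_mul _
  rw [← hL, hsw, hR]

noncomputable def primP (g : ℝ → ℝ) (x : ℝ) : ℝ := ∫ t in (0:ℝ)..x, exp t * tailG g t

lemma inner_eq (hm : AEStronglyMeasurable g (volume.restrict (Ioi 0)))
    (hi : IntegrableOn (fun x => x * g x) (Ioi 0)) (s y : ℝ) (hs : 0 < s) :
    ∫ z in Ioi s, (y * exp (-y) * g z + y * g y * exp (-z))
      = y * exp (-y) * tailG g s + y * g y * exp (-s) := by
  rw [integral_add ((g_int hm hi s hs).const_mul _) ((integrableOn_exp_neg_Ioi s).const_mul _),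
    integral_const_mul, integral_const_mul, integral_exp_neg_Ioi, tailG]

lemma key (hm : AEStronglyMeasurable g (volume.restrict (Ioi 0)))
    (hi : IntegrableOn (fun x => x * g x) (Ioi 0)) (x : ℝ) (hx : 0 < x) :
    ∫ y in Ioo 0 x, ∫ z in Ioi (x - y), (y * exp (-y) * g z + y * g y * exp (-z))
      = - x * tailG g x + (1 + x) * exp (-x) * primP g x := by
  have h1 : ∀ y ∈ Ioo 0 x, ∫ z in Ioi (x - y), (y * exp (-y) * g z + y * g y * exp (-z))
      = y * exp (-y) * tailG g (x - y) + exp (y - x) * (y * g y) := by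
    intro y hy
    rw [inner_eq hm hi _ _ (sub_pos.2 hy.2), neg_sub]; ring
  rw [setIntegral_congr_fun measurableSet_Ioo h1]
  set f : ℝ → ℝ := fun t => (x - t) * exp (-(x - t)) * tailG g t with hf
  have hfi : IntegrableOn f (Ioo 0 x) :=
    eG_int hm hi (fun t => (x - t) * exp (-(x - t))) (by fun_prop) x
  have hfi' : IntervalIntegrable f volume 0 x := by
    rw [intervalIntegrable_iff_integrableOn_Ioo_of_le hx.le]; exact hfi
  have hff : ∀ y, y * exp (-y) * tailG g (x - y) = f (x - y) := by
    intro y; simp [hf]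
  have hfi2 : IntegrableOn (fun y => f (x - y)) (Ioo 0 x) := by
    rw [← intervalIntegrable_iff_integrableOn_Ioo_of_le hx.le]
    have := hfi'.comp_sub_left x
    simp at this
    exact this.symm
  simp only [hff]
  rw [integral_add hfi2 (yg_int hi (fun y => exp (y - x)) (by fun_prop) x)]
  have hA : ∫ y in Ioo 0 x, f (x - y) = ∫ y in Ioo 0 x, f y := by
    rw [← integral_Ioc_eq_integral_Ioo, ← integral_Ioc_eq_integral_Ioo,
      ← intervalIntegral.integral_of_le hx.le, ← intervalIntegral.integral_of_le hx.le]
    simp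
  have hB : ∫ y in Ioo 0 x, exp (y - x) * (y * g y)
      = exp (-x) * ∫ y in Ioo 0 x, exp y * (y * g y) := by
    rw [← integral_const_mul]
    congr 1; ext y
    rw [sub_eq_add_neg, exp_add]; ring
  have hB2 := parts hm hi x hx
  have hA2 : ∫ y in Ioo 0 x, f y = exp (-x) * ((1 + x) * primP g x
      - ∫ t in Ioo 0 x, (1 + t) * exp t * tailG g t) := by
    rw [primP, intervalIntegral.integral_of_le hx.le, integral_Ioc_eq_integral_Ioo,
      ← integral_const_mul, ← integral_sub, ← integral_const_mul]
    · congr 1; ext y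
      simp only [hf]
      rw [neg_sub, sub_eq_add_neg y x, exp_add]; ring
    · exact (eG_int hm hi exp continuous_exp x).const_mul _
    · exact eG_int hm hi (fun t => (1 + t) * exp t) (by fun_prop) x
  rw [hA, hB, hA2, hB2]
  have : exp (-x) * exp x = 1 := by rw [← exp_add]; simp
  linear_combination (- x * tailG g x) * this

lemma G_eq (hm : AEStronglyMeasurable g (volume.restrict (Ioi 0)))
    (hi : IntegrableOn (fun x => x * g x) (Ioi 0)) (t : ℝ) (ht : 0 < t) :
    tailG g t = tailG g 1 - ∫ z in (1:ℝ)..t, g z := by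
  have := intervalIntegral.integral_interval_add_Ioi (g_int hm hi 1 one_pos) (g_int hm hi t ht)
  simp only [tailG]; linarith

lemma g_ii (hm : AEStronglyMeasurable g (volume.restrict (Ioi 0)))
    (hi : IntegrableOn (fun x => x * g x) (Ioi 0)) (s t : ℝ) (hs : 0 < s) (ht : 0 < t) :
    IntervalIntegrable g volume s t := by
  rw [intervalIntegrable_iff]
  exact (g_int hm hi _ (lt_min hs ht)).mono_set (fun z hz => hz.1)

lemma G_cont (hm : AEStronglyMeasurable g (volume.restrict (Ioi 0)))
    (hi : IntegrableOn (fun x => x * g x) (Ioi 0)) : ContinuousOn (tailG g) (Ioi 0) := by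
  intro t ht
  have ht' : 0 < t := ht
  refine ContinuousAt.continuousWithinAt ?_
  have h : ContinuousAt (fun t => tailG g 1 - ∫ z in (1:ℝ)..t, g z) t := by
    refine continuousAt_const.sub ?_
    have hh : 0 < min 1 (t/2) := by positivity
    have := intervalIntegral.continuousOn_primitive_interval' (a := 1)
      (g_ii hm hi (min 1 (t/2)) (max 1 (t+1)) hh (by positivity)) (by
        rw [uIcc_of_le ((min_le_left _ _).trans (le_max_left _ _))]
        exact ⟨min_le_left _ _, le_max_left _ _⟩)
    refine this.continuousAt ?_
    rw [uIcc_of_le ((min_le_left _ _).trans (le_max_left _ _))]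
    exact Icc_mem_nhds ((min_le_right _ _).trans_lt (by linarith))
      (lt_of_lt_of_le (by linarith) (le_max_right _ _))
  refine h.congr ?_
  filter_upwards [Ioi_mem_nhds ht'] with s hs
  exact (G_eq hm hi s hs).symm

lemma P_ii (hm : AEStronglyMeasurable g (volume.restrict (Ioi 0)))
    (hi : IntegrableOn (fun x => x * g x) (Ioi 0)) (x : ℝ) (hx : 0 < x) :
    IntervalIntegrable (fun t => exp t * tailG g t) volume 0 x := by
  rw [intervalIntegrable_iff_integrableOn_Ioo_of_le hx.le]
  exact eG_int hm hi exp continuous_exp x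

lemma P_deriv (hm : AEStronglyMeasurable g (volume.restrict (Ioi 0)))
    (hi : IntegrableOn (fun x => x * g x) (Ioi 0)) (x : ℝ) (hx : 0 < x) :
    HasDerivAt (primP g) (exp x * tailG g x) x := by
  have hc : ContinuousOn (fun t => exp t * tailG g t) (Ioi 0) :=
    continuous_exp.continuousOn.mul (G_cont hm hi)
  exact intervalIntegral.integral_hasDerivAt_right (P_ii hm hi x hx)
    (hc.stronglyMeasurableAtFilter isOpen_Ioi x hx) (hc.continuousAt (Ioi_mem_nhds hx))

lemma G_bound (hm : AEStronglyMeasurable g (volume.restrict (Ioi 0)))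
    (hi : IntegrableOn (fun x => x * g x) (Ioi 0)) (x : ℝ) (hx : 0 < x) :
    |x * tailG g x| ≤ ∫ z in Ioi (0:ℝ), ‖z * g z‖ := by
  rw [tailG, ← integral_const_mul, ← Real.norm_eq_abs]
  have hsub : Ioi x ⊆ Ioi (0:ℝ) := Ioi_subset_Ioi hx.le
  calc _ ≤ ∫ z in Ioi x, ‖x * g z‖ := norm_integral_le_integral_norm _
    _ ≤ ∫ z in Ioi x, ‖z * g z‖ := by
        refine setIntegral_mono_on ((g_int hm hi x hx).const_mul x).norm
          (hi.mono_set hsub).norm measurableSet_Ioi fun z hz => ?_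
        have hz' : x < z := hz
        rw [norm_mul, norm_mul, norm_of_nonneg hx.le, norm_of_nonneg (hx.trans hz').le]
        gcongr
    _ ≤ _ := setIntegral_mono_set hi.norm (ae_of_all _ fun z => norm_nonneg _)
        hsub.eventuallyLE

lemma P_bound (hm : AEStronglyMeasurable g (volume.restrict (Ioi 0)))
    (hi : IntegrableOn (fun x => x * g x) (Ioi 0)) (x : ℝ) (hx : 0 < x) :
    |exp (-x) * primP g x| ≤ ∫ z in Ioi (0:ℝ), ‖tailG g z‖ := by
  rw [primP, intervalIntegral.integral_of_le hx.le, integral_Ioc_eq_integral_Ioo,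
    ← integral_const_mul, ← Real.norm_eq_abs]
  calc _ ≤ ∫ t in Ioo 0 x, ‖exp (-x) * (exp t * tailG g t)‖ := norm_integral_le_integral_norm _
    _ ≤ ∫ t in Ioo 0 x, ‖tailG g t‖ := by
        refine setIntegral_mono_on ((eG_int hm hi exp continuous_exp x).const_mul _).norm
          ((G_int hm hi).mono_set Ioo_subset_Ioi_self).norm measurableSet_Ioo fun z hz => ?_
        rw [← mul_assoc, ← exp_add, norm_mul, Real.norm_of_nonneg (exp_pos _).le]
        refine mul_le_of_le_one_left (norm_nonneg _) ?_
        rw [exp_le_one_iff]; linarith [hz.2]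
    _ ≤ _ := setIntegral_mono_set (G_int hm hi).norm (ae_of_all _ fun z => norm_nonneg _)
        Ioo_subset_Ioi_self.eventuallyLE

noncomputable def gam (g : ℝ → ℝ) (x : ℝ) : ℝ :=
  2 / x ^ 2 * (- x * tailG g x + (1 + x) * exp (-x) * primP g x)

lemma Lop_eq (hm : AEStronglyMeasurable g (volume.restrict (Ioi 0)))
    (hi : IntegrableOn (fun x => x * g x) (Ioi 0)) (x : ℝ) (hx : 0 < x) :
    Lop g x = g x - gam g x := by
  rw [Lop, key hm hi x hx, gam]

lemma forward (hm : AEStronglyMeasurable g (volume.restrict (Ioi 0)))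
    (hi : IntegrableOn (fun x => x * g x) (Ioi 0))
    (h : ∀ᵐ x ∂(volume.restrict (Ioi (0:ℝ))), Lop g x = 0) :
    ∃ c : ℝ, ∀ᵐ x ∂(volume.restrict (Ioi (0:ℝ))), g x = c * ((1 - x) * exp (-x)) := by
  have hae : ∀ᵐ x ∂(volume.restrict (Ioi (0:ℝ))), g x = gam g x := by
    filter_upwards [h, ae_restrict_mem measurableSet_Ioi] with x hx hx0
    rw [Lop_eq hm hi x hx0] at hx; linarith
  have hPc : ContinuousOn (primP g) (Ioi 0) := fun x hx =>
    (P_deriv hm hi x hx).continuousAt.continuousWithinAt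
  have hγc : ContinuousOn (gam g) (Ioi 0) := by
    have hG := G_cont hm hi
    unfold gam
    refine ContinuousOn.mul (continuousOn_const.div (by fun_prop) ?_) (by fun_prop)
    intro x hx
    exact pow_ne_zero 2 (ne_of_gt hx)
  have hsub : ∀ t : ℝ, 0 < t → uIoc 1 t ⊆ Ioi (0:ℝ) := fun t ht z hz =>
    (lt_min one_pos ht).trans hz.1
  have hG2 : ∀ t : ℝ, 0 < t → tailG g t = tailG g 1 - ∫ z in (1:ℝ)..t, gam g z := by
    intro t ht
    rw [G_eq hm hi t ht]
    congr 1
    refine intervalIntegral.integral_congr_ae_restrict ?_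
    exact ae_restrict_of_ae_restrict_of_subset (hsub t ht) hae
  have hGd : ∀ t : ℝ, 0 < t → HasDerivAt (tailG g) (- gam g t) t := by
    intro t ht
    have hii : IntervalIntegrable (gam g) volume 1 t := by
      refine (hγc.mono ?_).intervalIntegrable
      intro z hz
      exact (lt_min one_pos ht).trans_le hz.1
    have h1 := (intervalIntegral.integral_hasDerivAt_right hii
      (hγc.stronglyMeasurableAtFilter isOpen_Ioi t ht)
      (hγc.continuousAt (Ioi_mem_nhds ht))).const_sub (tailG g 1)
    refine h1.congr_of_eventuallyEq ?_
    filter_upwards [Ioi_mem_nhds ht] with s hs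
    exact hG2 s hs
  -- first integral
  have hexp : ∀ x : ℝ, HasDerivAt (fun x => exp (-x)) (-exp (-x)) x := by
    intro x
    simpa using (hasDerivAt_neg x).exp
  have hee : ∀ x : ℝ, exp (-x) * exp x = 1 := fun x => by rw [← exp_add]; simp
  set F : ℝ → ℝ := fun x => tailG g x - 2 * (exp (-x) * primP g x / x) with hF
  have hFd : ∀ x : ℝ, 0 < x → HasDerivAt F 0 x := by
    intro x hx
    have := (hGd x hx).sub
      ((((hexp x).mul (P_deriv hm hi x hx)).div (hasDerivAt_id x) hx.ne').const_mul 2)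
    refine HasDerivAt.congr_deriv this ?_
    simp only [gam, id, Pi.mul_apply]
    have h1 := hee x
    field_simp
    linear_combination (-2 * x * tailG g x) * h1
  obtain ⟨C, hC⟩ : ∃ C, ∀ x ∈ Ioi (0:ℝ), F x = C :=
    isOpen_Ioi.exists_is_const_of_deriv_eq_zero isPreconnected_Ioi
      (fun x hx => (hFd x hx).differentiableAt.differentiableWithinAt)
      (fun x hx => (hFd x hx).deriv)
  have hC0 : C = 0 := by
    set M := (∫ z in Ioi (0:ℝ), ‖z * g z‖) + 2 * ∫ z in Ioi (0:ℝ), ‖tailG g z‖ with hM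
    have hb : ∀ x : ℝ, 0 < x → x * |C| ≤ M := by
      intro x hx
      have e : x * C = x * tailG g x - 2 * (exp (-x) * primP g x) := by
        rw [← hC x hx, hF]; field_simp
      have h1 := G_bound hm hi x hx
      have h2 := P_bound hm hi x hx
      have : x * |C| = |x * C| := by rw [abs_mul, abs_of_pos hx]
      rw [this, e]
      rw [abs_le] at *
      constructor <;> linarith
    by_contra hne
    have hpos : 0 < |C| := abs_pos.2 hne
    have hM0 : 0 < M := by linarith [hb 1 one_pos]
    have := hb ((M + 1) / |C|) (by positivity)
    rw [div_mul_cancel₀ _ hpos.ne'] at this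
    linarith
  have hGP : ∀ x : ℝ, 0 < x → x * tailG g x = 2 * (exp (-x) * primP g x) := by
    intro x hx
    have := hC x hx
    rw [hC0, hF] at this
    simp only at this
    field_simp at this
    linarith
  obtain ⟨k, hk⟩ : ∃ k, ∀ x ∈ Ioi (0:ℝ), primP g x / x ^ 2 = k := by
    have hQ : ∀ x : ℝ, 0 < x → HasDerivAt (fun x => primP g x / x ^ 2) 0 x := by
      intro x hx
      have := (P_deriv hm hi x hx).div (hasDerivAt_pow 2 x) (by positivity)
      refine HasDerivAt.congr_deriv this ?_
      have h1 := hee x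
      have h2 := hGP x hx
      field_simp
      simp
      linear_combination (x * exp x) * h2 + 2 * x * primP g x * h1
    exact isOpen_Ioi.exists_is_const_of_deriv_eq_zero isPreconnected_Ioi
      (fun x hx => (hQ x hx).differentiableAt.differentiableWithinAt)
      (fun x hx => (hQ x hx).deriv)
  refine ⟨-2 * k, ?_⟩
  filter_upwards [hae, ae_restrict_mem measurableSet_Ioi] with x hx hx0
  have hx0' : 0 < x := hx0
  have h1 := hk x hx0
  have h2 := hGP x hx0
  rw [div_eq_iff (by positivity)] at h1
  rw [hx, gam, neg_mul, h2, h1]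
  field_simp
  ring

lemma backward (hm : AEStronglyMeasurable g (volume.restrict (Ioi 0)))
    (hi : IntegrableOn (fun x => x * g x) (Ioi 0)) (c : ℝ)
    (h : ∀ᵐ x ∂(volume.restrict (Ioi (0:ℝ))), g x = c * ((1 - x) * exp (-x))) :
    ∀ᵐ x ∂(volume.restrict (Ioi (0:ℝ))), Lop g x = 0 := by
  have hG : ∀ t : ℝ, 0 < t → tailG g t = - c * (t * exp (-t)) := by
    intro t ht
    have hae := ae_restrict_of_ae_restrict_of_subset (Ioi_subset_Ioi ht.le) h
    have hii : IntegrableOn (fun x => c * ((1 - x) * exp (-x))) (Ioi t) :=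
      (g_int hm hi t ht).congr hae
    rw [tailG, integral_congr_ae hae,
      integral_Ioi_of_hasDerivAt_of_tendsto' (f := fun x => c * (x * exp (-x))) (m := 0) ?_ hii ?_]
    · ring
    · intro x _
      have h1 : HasDerivAt (fun x => exp (-x)) (-exp (-x)) x := by
        simpa using (hasDerivAt_neg x).exp
      have := ((hasDerivAt_id x).mul h1).const_mul c
      refine HasDerivAt.congr_deriv this ?_
      simp only [id]; ring
    · have := (tendsto_pow_mul_exp_neg_atTop_nhds_zero 1).const_mul c
      simpa using this
  have hP : ∀ x : ℝ, 0 < x → primP g x = - c * (x ^ 2 / 2) := by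
    intro x hx
    have : ∫ t in (0:ℝ)..x, exp t * tailG g t = ∫ t in (0:ℝ)..x, (-c) * t := by
      refine intervalIntegral.integral_congr_ae (ae_of_all _ fun t ht => ?_)
      rw [uIoc_of_le hx.le] at ht
      rw [hG t ht.1]
      have : exp (-t) * exp t = 1 := by rw [← exp_add]; simp
      linear_combination (-c * t) * this
    rw [primP, this, intervalIntegral.integral_const_mul, integral_id]
    ring
  filter_upwards [h, ae_restrict_mem measurableSet_Ioi] with x hx hx0
  have hx0' : 0 < x := hx0
  rw [Lop_eq hm hi x hx0, gam, hG x hx0, hP x hx0, hx]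
  field_simp
  ring

end

theorem stmt12 (a b : ℝ) (ha : a ∈ Ioo (-1:ℝ) 1) (hb : 1 < b)
    (g : ℝ → ℝ) (hg : MemX a b g) :
    (∀ᵐ x ∂(volume.restrict (Ioi (0:ℝ))), Lop g x = 0) ↔
      ∃ c : ℝ, ∀ᵐ x ∂(volume.restrict (Ioi (0:ℝ))), g x = c * ((1 - x) * exp (-x)) := by
  have hm := aesm_of_MemX a b g hg
  have hi := xg_int a b ha.2 hb g hg
  exact ⟨forward hm hi, fun ⟨c, hc⟩ => backward hm hi c hc⟩
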